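/- Let F be a finite field, let s,ℓ,k ≥ 1, and let α,β,γ be nonzero elements of F; let r and r' be the multiplicative orders of γ and β. Assume ω ∈ F has multiplicative order rk with ω^k = γ, and θ ∈ F has multiplicative order r'ℓ with θ^ℓ = β. Let R := F[x,y,z]/⟨x^s−α, y^ℓ−β, z^k−γ⟩ with quotient map π, and let ζ_t(z) := ∏_{t'≠t}(z − ω^{1+t'r})/(ω^{1+tr} − ω^{1+t'r}) for 0 ≤ t ≤ k−1 and η_j(y) := ∏_{j'≠j}(y − θ^{1+j'r'})/(θ^{1+jr'} − θ^{1+j'r'}) for 0 ≤ j ≤ ℓ−1. For 0 ≤ t ≤ k−1 and 0 ≤ j ≤ ℓ−1 let p_j^{(t)} ∈ F[x] be a monic divisor of x^s − α, let q_j^{(t)} := (x^s − α)/p_j^{(t)}, and let C be the ideal of R generated by the elements π(ζ_t(z)·η_j(y)·p_j^{(t)}(x)). Then the annihilator ideal {f ∈ R : f·g = 0 for all g ∈ C} equals the ideal of R generated by the elements π(ζ_t(z)·η_j(y)·q_j^{(t)}(x)), 0 ≤ t ≤ k−1, 0 ≤ j ≤ ℓ−1. -/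

import Mathlib

/-!
Put `c t = ω ^ (1 + t * r)` and `d j = θ ^ (1 + j * r')`. The order hypotheses make the `c t`
(`t < k`) pairwise distinct roots of `z ^ k - γ`, so `z ^ k - γ = ∏ t, (z - c t)`, and likewise for
the `d j`. Hence the classes `e t j` of `ζ_t(z) η_j(y)` sum to `1`, because Lagrange basis
polynomials do, and satisfy `e t j * z = c t * e t j` and `e t j * y = d j * e t j`. So multiplying
`G` by `e t j` only sees the specialization `G(x, d j, c t) ∈ F[x]` (`node_mul_mk`), while
specializing sends a relation in `R` to a relation modulo `x ^ s - α` (`dvd_evalAt`).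

These two facts reduce the theorem to `F[x]`: if `f` kills `e t j * p t j`, then
`p t j * q t j ∣ f(x, d j, c t) * p t j`, so `q t j` divides `f(x, d j, c t)` and `e t j * f` is a
multiple of `e t j * q t j`; then sum over `t` and `j`. Conversely, the product of two generators
with different indices specializes to `0`, and with equal indices it contains `p t j * q t j`.
-/

set_option synthInstance.maxHeartbeats 1000000

open Polynomial

/-- The Lagrange interpolation polynomial `ζ_t` at the `k` points `ω^{1+t'r}`,
`0 ≤ t' ≤ k−1`. -/
noncomputable def zetaPoly {F : Type*} [Field F] (ω : F) (r k t : ℕ) : Polynomial F :=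
  ∏ t' ∈ (Finset.range k).erase t,
    (C ((ω ^ (1 + t * r) - ω ^ (1 + t' * r))⁻¹) * (X - C (ω ^ (1 + t' * r))))

/-- The ideal `⟨x^s − α, y^ℓ − β, z^k − γ⟩` of `F[x,y,z]`. -/
noncomputable def ccIdeal (F : Type*) [Field F] (s l k : ℕ) (α β γ : F) :
    Ideal (MvPolynomial (Fin 3) F) :=
  Ideal.span { MvPolynomial.X 0 ^ s - MvPolynomial.C α,
               MvPolynomial.X 1 ^ l - MvPolynomial.C β,
               MvPolynomial.X 2 ^ k - MvPolynomial.C γ }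

/-- A univariate polynomial viewed in `F[x,y,z]` as a polynomial in `x`. -/
noncomputable def inX {F : Type*} [Field F] (p : Polynomial F) : MvPolynomial (Fin 3) F :=
  Polynomial.aeval (MvPolynomial.X 0) p

/-- A univariate polynomial viewed in `F[x,y,z]` as a polynomial in `y`. -/
noncomputable def inY {F : Type*} [Field F] (p : Polynomial F) : MvPolynomial (Fin 3) F :=
  Polynomial.aeval (MvPolynomial.X 1) p

/-- A univariate polynomial viewed in `F[x,y,z]` as a polynomial in `z`. -/
noncomputable def inZ {F : Type*} [Field F] (p : Polynomial F) : MvPolynomial (Fin 3) F :=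
  Polynomial.aeval (MvPolynomial.X 2) p

/-- The interpolation nodes are distinct since the exponents `1 + t * r` are distinct modulo the
order `r * k` of `ω`. -/
lemma node_injOn {F : Type*} [Field F] [Fintype F] {k r : ℕ} {γ ω : F} (hγ : γ ≠ 0)
    (hr : orderOf γ = r) (hω : orderOf ω = r * k) :
    Set.InjOn (fun t : ℕ => ω ^ (1 + t * r)) (Finset.range k : Set ℕ) := by
  have hr0 : 0 < r := by
    rw [← hr, ← Units.val_mk0 hγ, orderOf_units]
    exact orderOf_pos _
  intro a ha b hb hab
  simp only [Finset.coe_range, Set.mem_Iio] at ha hb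
  have hω0 : ω ≠ 0 := by
    rintro rfl
    rw [orderOf_zero] at hω
    have := Nat.mul_pos hr0 (show 0 < k by omega)
    omega
  have h : ω ^ (a * r) = ω ^ (b * r) := by
    simp only [pow_add] at hab
    exact mul_left_cancel₀ (pow_ne_zero 1 hω0) hab
  have := pow_injOn_Iio_orderOf (x := ω)
    (show a * r < orderOf ω by rw [hω]; nlinarith)
    (show b * r < orderOf ω by rw [hω]; nlinarith) h
  exact Nat.eq_of_mul_eq_mul_right hr0 this

lemma node_pow {F : Type*} [Field F] {k r : ℕ} {γ ω : F} (hω : orderOf ω = r * k)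
    (hωk : ω ^ k = γ) (t : ℕ) : (ω ^ (1 + t * r)) ^ k = γ := by
  rw [← pow_mul, add_mul, pow_add, one_mul, hωk,
    show t * r * k = orderOf ω * t by rw [hω]; ring, pow_mul, pow_orderOf_eq_one, one_pow, mul_one]

lemma nodal_eq {F : Type*} [Field F] [Fintype F] {k r : ℕ} {γ ω : F} (hk : 1 ≤ k) (hγ : γ ≠ 0)
    (hr : orderOf γ = r) (hω : orderOf ω = r * k) (hωk : ω ^ k = γ) :
    Lagrange.nodal (Finset.range k) (fun t : ℕ => ω ^ (1 + t * r)) = X ^ k - C γ := by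
  refine Polynomial.eq_of_degree_sub_lt_of_eval_index_eq _ (node_injOn hγ hr hω) ?_ ?_
  · have h1 : (Lagrange.nodal (Finset.range k) (fun t : ℕ => ω ^ (1 + t * r))).degree
        = (X ^ k - C γ : F[X]).degree := by
      rw [Lagrange.degree_nodal, degree_X_pow_sub_C hk]; simp
    have h2 := degree_sub_lt_left h1 Lagrange.nodal_ne_zero
      (by rw [Lagrange.nodal_monic.leadingCoeff, (monic_X_pow_sub_C γ (by omega)).leadingCoeff])
    rwa [Lagrange.degree_nodal] at h2
  · intro i hi
    have h0 := Lagrange.eval_nodal_at_node (v := fun t : ℕ => ω ^ (1 + t * r)) hi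
    beta_reduce at h0
    rw [h0]
    simp [node_pow hω hωk i]

/-- `ζ_t` times its missing linear factor is a scalar multiple of `z ^ k - γ`. -/
lemma dvd_zetaPoly_mul {F : Type*} [Field F] [Fintype F] {k r : ℕ} {γ ω : F} (hk : 1 ≤ k)
    (hγ : γ ≠ 0) (hr : orderOf γ = r) (hω : orderOf ω = r * k) (hωk : ω ^ k = γ)
    {t : ℕ} (ht : t < k) :
    (X ^ k - C γ) ∣ zetaPoly ω r k t * (X - C (ω ^ (1 + t * r))) := by
  rw [← nodal_eq hk hγ hr hω hωk, Lagrange.nodal,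
    ← Finset.prod_erase_mul _ _ (Finset.mem_range.2 ht), zetaPoly, Finset.prod_mul_distrib,
    mul_assoc]
  exact Dvd.intro_left _ rfl

lemma eval_zetaPoly {F : Type*} [Field F] [Fintype F] {k r : ℕ} {γ ω : F} (hγ : γ ≠ 0)
    (hr : orderOf γ = r) (hω : orderOf ω = r * k) (t t' : Fin k) :
    (zetaPoly ω r k t).eval (ω ^ (1 + (t' : ℕ) * r)) = if t = t' then 1 else 0 := by
  have hv := node_injOn hγ hr hω
  split_ifs with h
  · subst h
    exact Lagrange.eval_basis_self (v := fun t : ℕ => ω ^ (1 + t * r)) hv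
      (Finset.mem_range.2 t.2)
  · exact Lagrange.eval_basis_of_ne (v := fun t : ℕ => ω ^ (1 + t * r))
      (fun h' => h (Fin.ext h')) (Finset.mem_range.2 t'.2)

lemma sum_zetaPoly {F : Type*} [Field F] [Fintype F] {k r : ℕ} {γ ω : F} (hk : 1 ≤ k)
    (hγ : γ ≠ 0) (hr : orderOf γ = r) (hω : orderOf ω = r * k) :
    ∑ t : Fin k, zetaPoly ω r k t = 1 := by
  rw [Fin.sum_univ_eq_sum_range (fun t => zetaPoly ω r k t)]
  exact Lagrange.sum_basis (node_injOn hγ hr hω) ⟨0, Finset.mem_range.2 hk⟩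

/-- The specialization `G ↦ G(x, d, c)` from `F[x,y,z]` to `F[x]`. -/
noncomputable def evalAt {F : Type*} [Field F] (d c : F) : MvPolynomial (Fin 3) F →ₐ[F] F[X] :=
  MvPolynomial.aeval ![X, C d, C c]

lemma evalAt_inX {F : Type*} [Field F] (d c : F) (p : F[X]) : evalAt d c (inX p) = p := by
  rw [inX, ← Polynomial.aeval_algHom_apply]
  simp [evalAt]

lemma evalAt_inY {F : Type*} [Field F] (d c : F) (p : F[X]) :
    evalAt d c (inY p) = C (p.eval d) := by
  rw [inY, ← Polynomial.aeval_algHom_apply]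
  simp only [evalAt, MvPolynomial.aeval_X]
  exact Polynomial.aeval_algebraMap_apply_eq_algebraMap_eval d p

lemma evalAt_inZ {F : Type*} [Field F] (d c : F) (p : F[X]) :
    evalAt d c (inZ p) = C (p.eval c) := by
  rw [inZ, ← Polynomial.aeval_algHom_apply]
  simp only [evalAt, MvPolynomial.aeval_X]
  exact Polynomial.aeval_algebraMap_apply_eq_algebraMap_eval c p

/-- Specializing `y` and `z` at roots of `y ^ l - β` and `z ^ k - γ` is well defined as a map from
the quotient ring to `F[x] / (x ^ s - α)`. -/
lemma dvd_evalAt {F : Type*} [Field F] {s l k : ℕ} {α β γ d c : F} (hd : d ^ l = β)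
    (hc : c ^ k = γ) {G : MvPolynomial (Fin 3) F} (hG : G ∈ ccIdeal F s l k α β γ) :
    X ^ s - C α ∣ evalAt d c G := by
  have hle : ccIdeal F s l k α β γ ≤
      (Ideal.span {X ^ s - C α}).comap (evalAt d c) := by
    rw [ccIdeal, Ideal.span_le]
    rintro _ (rfl | rfl | rfl)
    · simp [evalAt]
    · simp [evalAt, ← hd]
    · simp [evalAt, ← hc]
  exact Ideal.mem_span_singleton.1 (hle hG)

/-- An element `e` on which `y` and `z` act as the scalars `d` and `c` only sees the specialization
`G(x, d, c)` of a polynomial `G`. -/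
lemma mul_mk_eq {F : Type*} [Field F] {I : Ideal (MvPolynomial (Fin 3) F)}
    {e : MvPolynomial (Fin 3) F ⧸ I} {d c : F}
    (hd : e * Ideal.Quotient.mk I (MvPolynomial.X 1 - MvPolynomial.C d) = 0)
    (hc : e * Ideal.Quotient.mk I (MvPolynomial.X 2 - MvPolynomial.C c) = 0)
    (G : MvPolynomial (Fin 3) F) :
    e * Ideal.Quotient.mk I G = e * Ideal.Quotient.mk I (inX (evalAt d c G)) := by
  rw [map_sub, mul_sub, sub_eq_zero] at hd hc
  induction G using MvPolynomial.induction_on with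
  | C a => simp [evalAt, inX, ← MvPolynomial.algebraMap_eq]
  | add f g hf hg =>
    simp only [inX, map_add, mul_add] at *
    rw [hf, hg]
  | mul_X f i hf =>
    have h : e * Ideal.Quotient.mk I (MvPolynomial.X i) =
        e * Ideal.Quotient.mk I (inX (evalAt d c (MvPolynomial.X i))) := by
      fin_cases i
      · simp [evalAt, inX]
      · simpa [evalAt, inX, ← MvPolynomial.algebraMap_eq] using hd
      · simpa [evalAt, inX, ← MvPolynomial.algebraMap_eq] using hc
    have hm : inX (evalAt d c (f * MvPolynomial.X i)) =
        inX (evalAt d c f) * inX (evalAt d c (MvPolynomial.X i)) := by simp [inX]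
    rw [hm, map_mul, map_mul, ← mul_assoc, hf, mul_right_comm, h]
    ring

lemma mk_inX_eq_zero {F : Type*} [Field F] {s l k : ℕ} {α β γ : F} {p : F[X]}
    (h : X ^ s - C α ∣ p) : Ideal.Quotient.mk (ccIdeal F s l k α β γ) (inX p) = 0 := by
  obtain ⟨g, rfl⟩ := h
  rw [inX, map_mul]
  refine Ideal.Quotient.eq_zero_iff_mem.2 (Ideal.mul_mem_right _ _ (Ideal.subset_span ?_))
  simp [← MvPolynomial.algebraMap_eq]

lemma mk_inY_eq_zero {F : Type*} [Field F] {s l k : ℕ} {α β γ : F} {p : F[X]}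
    (h : X ^ l - C β ∣ p) : Ideal.Quotient.mk (ccIdeal F s l k α β γ) (inY p) = 0 := by
  obtain ⟨g, rfl⟩ := h
  rw [inY, map_mul]
  refine Ideal.Quotient.eq_zero_iff_mem.2 (Ideal.mul_mem_right _ _ (Ideal.subset_span ?_))
  simp [← MvPolynomial.algebraMap_eq]

lemma mk_inZ_eq_zero {F : Type*} [Field F] {s l k : ℕ} {α β γ : F} {p : F[X]}
    (h : X ^ k - C γ ∣ p) : Ideal.Quotient.mk (ccIdeal F s l k α β γ) (inZ p) = 0 := by
  obtain ⟨g, rfl⟩ := h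
  rw [inZ, map_mul]
  refine Ideal.Quotient.eq_zero_iff_mem.2 (Ideal.mul_mem_right _ _ (Ideal.subset_span ?_))
  simp [← MvPolynomial.algebraMap_eq]

/-- If `a(z)` and `b(y)` are eigenvectors for `z` and `y` modulo the respective relations, then
multiplication by `a(z) b(y)` factors through the specialization at the eigenvalues. -/
lemma node_mul_mk {F : Type*} [Field F] {s l k : ℕ} {α β γ d c : F} {a b : F[X]}
    (ha : X ^ k - C γ ∣ a * (X - C c)) (hb : X ^ l - C β ∣ b * (X - C d))
    (G : MvPolynomial (Fin 3) F) :
    Ideal.Quotient.mk (ccIdeal F s l k α β γ) (inZ a * inY b * G) =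
      Ideal.Quotient.mk (ccIdeal F s l k α β γ) (inZ a * inY b * inX (evalAt d c G)) := by
  rw [map_mul _ _ G, map_mul _ _ (inX _)]
  refine mul_mk_eq ?_ ?_ G
  · have h : inZ a * inY b * (MvPolynomial.X 1 - MvPolynomial.C d) =
        inZ a * inY (b * (X - C d)) := by
      simp [inY, ← MvPolynomial.algebraMap_eq, mul_assoc]
    rw [← map_mul, h, map_mul, mk_inY_eq_zero hb, mul_zero]
  · have h : inZ a * inY b * (MvPolynomial.X 2 - MvPolynomial.C c) =
        inZ (a * (X - C c)) * inY b := by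
      simp [inZ, ← MvPolynomial.algebraMap_eq, mul_right_comm]
    rw [← map_mul, h, map_mul, mk_inZ_eq_zero ha, zero_mul]

/-- **Theorem 3 (annihilator form)**: the annihilator of the 3-D `(α,β,γ)`-constacyclic
code `C = ⟨ζ_t(z)·η_j(y)·p_j^{(t)}(x)⟩` in `R = F[x,y,z]/⟨x^s−α, y^ℓ−β, z^k−γ⟩` is the
ideal generated by the `ζ_t(z)·η_j(y)·q_j^{(t)}(x)`, where `p_j^{(t)}·q_j^{(t)} = x^s−α`. -/
theorem stmt11 {F : Type*} [Field F] [Fintype F] (s l k : ℕ)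
    (hs : 1 ≤ s) (hl : 1 ≤ l) (hk : 1 ≤ k)
    (α β γ : F) (hα : α ≠ 0) (hβ : β ≠ 0) (hγ : γ ≠ 0)
    (r r' : ℕ) (hr : orderOf γ = r) (hr' : orderOf β = r')
    (ω : F) (hω : orderOf ω = r * k) (hωk : ω ^ k = γ)
    (θ : F) (hθ : orderOf θ = r' * l) (hθl : θ ^ l = β)
    (p q : Fin k → Fin l → Polynomial F)
    (hmonic : ∀ t j, (p t j).Monic)
    (hpq : ∀ t j, p t j * q t j = Polynomial.X ^ s - Polynomial.C α)
    (C : Ideal (MvPolynomial (Fin 3) F ⧸ ccIdeal F s l k α β γ))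
    (hC : C = Ideal.span (Set.range fun tj : Fin k × Fin l =>
      Ideal.Quotient.mk (ccIdeal F s l k α β γ)
        (inZ (zetaPoly ω r k tj.1) * inY (zetaPoly θ r' l tj.2) * inX (p tj.1 tj.2)))) :
    ∀ f : MvPolynomial (Fin 3) F ⧸ ccIdeal F s l k α β γ,
      (∀ g ∈ C, f * g = 0) ↔
        f ∈ Ideal.span (Set.range fun tj : Fin k × Fin l =>
          Ideal.Quotient.mk (ccIdeal F s l k α β γ)
            (inZ (zetaPoly ω r k tj.1) * inY (zetaPoly θ r' l tj.2) * inX (q tj.1 tj.2))) := by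
  intro f
  obtain ⟨G, rfl⟩ := Ideal.Quotient.mk_surjective f
  have hζ := fun t : Fin k => dvd_zetaPoly_mul hk hγ hr hω hωk t.2
  have hη := fun j : Fin l => dvd_zetaPoly_mul hl hβ hr' hθ hθl j.2
  have hev : ∀ (t t' : Fin k) (j j' : Fin l) (u : F[X]),
      evalAt (θ ^ (1 + (j : ℕ) * r')) (ω ^ (1 + (t : ℕ) * r))
        (inZ (zetaPoly ω r k t') * inY (zetaPoly θ r' l j') * inX u) =
      if t' = t ∧ j' = j then u else 0 := by
    intro t t' j j' u
    rw [map_mul, map_mul, evalAt_inX, evalAt_inY, evalAt_inZ, eval_zetaPoly hγ hr hω,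
      eval_zetaPoly hβ hr' hθ]
    by_cases h1 : t' = t <;> by_cases h2 : j' = j <;> simp [h1, h2]
  subst hC
  constructor
  · intro hf
    -- The classes of `ζ_t η_j` sum to `1`, so it suffices to treat each `ζ_t η_j G`.
    have hsum : (∑ t : Fin k, ∑ j : Fin l,
        inZ (zetaPoly ω r k t) * inY (zetaPoly θ r' l j) * G) = G := by
      have h1 : (∑ t : Fin k, inZ (zetaPoly ω r k t)) = 1 := by
        simp only [inZ, ← map_sum, sum_zetaPoly hk hγ hr hω, map_one]
      have h2 : (∑ j : Fin l, inY (zetaPoly θ r' l j)) = 1 := by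
        simp only [inY, ← map_sum, sum_zetaPoly hl hβ hr' hθ, map_one]
      simp only [← Finset.sum_mul, ← Finset.mul_sum, h1, h2, one_mul]
    rw [← hsum, map_sum]
    refine Ideal.sum_mem _ fun t _ => ?_
    rw [map_sum]
    refine Ideal.sum_mem _ fun j _ => ?_
    rw [node_mul_mk (hζ t) (hη j) G]
    have h0 := hf _ (Ideal.subset_span ⟨(t, j), rfl⟩)
    rw [← map_mul, Ideal.Quotient.eq_zero_iff_mem] at h0
    have h1 := dvd_evalAt (node_pow hθ hθl j) (node_pow hω hωk t) h0
    rw [map_mul, hev t t j j, if_pos ⟨rfl, rfl⟩, ← hpq t j, mul_comm (p t j)] at h1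
    obtain ⟨g, hg⟩ := (mul_dvd_mul_iff_right (hmonic t j).ne_zero).1 h1
    have hmul : inX (q t j * g) = inX (q t j) * inX g := map_mul _ _ _
    rw [hg, hmul, ← mul_assoc, map_mul]
    exact Ideal.mul_mem_right _ _ (Ideal.subset_span ⟨(t, j), rfl⟩)
  · intro hf g hg
    -- It suffices to multiply generators, since the product ideal is spanned by such products.
    generalize Ideal.Quotient.mk (ccIdeal F s l k α β γ) G = f at hf
    have hmul := Ideal.mul_mem_mul hf hg
    rw [Ideal.span_mul_span'] at hmul
    refine (Ideal.mem_bot).1 (Ideal.span_le.2 ?_ hmul)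
    rintro _ ⟨_, ⟨⟨t, j⟩, rfl⟩, _, ⟨⟨t', j'⟩, rfl⟩, rfl⟩
    simp only [SetLike.mem_coe, Ideal.mem_bot, ← map_mul]
    rw [mul_assoc (inZ _ * inY _), node_mul_mk (hζ t) (hη j), map_mul (evalAt _ _), evalAt_inX,
      hev, map_mul]
    refine mul_eq_zero_of_right _ (mk_inX_eq_zero ?_)
    split_ifs with h
    · obtain ⟨rfl, rfl⟩ := h
      rw [← hpq, mul_comm]
    · simp
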